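/- Let W be a 2-Lannér Coxeter group of rank n (an irreducible, large Coxeter group such that the standard subgroup generated by any n−2 of the generators is finite). Then the Tits symmetric bilinear form B_W, given by the matrix with entries −2cos(π/M_{st}), is nondegenerate of signature (n−1, 1). -/

import Mathlib

/-!
Let `q` be the Tits form. Since the off-diagonal entries of its matrix are nonpositive,
`q x⁺ + q x⁻ ≤ q x`. If `q x ≤ 0` and `x i = 0`, then `x` cannot take both signs: otherwise each of
`x⁺`, `x⁻` vanishes at `i` and at a further index, where the form is positive definite. On a
two-dimensional subspace with `q ≤ 0`, take `u ≠ 0` with `u i = 0` and `v ≠ 0` with `v j = 0`; for a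
third index `k`, the combination of `u` and `v` vanishing at `k` takes both signs, a contradiction.
So such subspaces have dimension at most `1`, and `q` has signature `(n - 1, 1)` as soon as it is
not positive semidefinite.

Positivity on vectors supported on `T` when `W_T` is finite follows by averaging: a `W_T`-invariant
inner product agrees with `q`, up to scale, after rescaling the simple roots in `T`.

If `q` is positive semidefinite, it is the Gram form of vectors `a s` in a Euclidean space. Each
`w ∈ W` changes the sum of the coordinates of a vector by its pairing with a vector `c w` with
`‖c w‖ ≤ √2 ℓ(w)`. For `g ≠ h` some root is simple after applying `h` and negative after applying
`g`, so `c g` and `c h` are a definite distance apart. Comparing volumes, `W` has polynomial growth,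
so it contains no free monoid of rank two and is not large.
-/

open Matrix Module

open scoped InnerProductSpace

/-! ### Quadratic forms with nonpositive off-diagonal entries -/

lemma exists_ne_zero_mem_apply_eq_zero {K V : Type*} [DivisionRing K] [AddCommGroup V] [Module K V]
    [FiniteDimensional K V] {U : Submodule K V} (hU : 1 < finrank K U) (f : V →ₗ[K] K) :
    ∃ u ∈ U, u ≠ 0 ∧ f u = 0 := by
  obtain ⟨u, hu, hu0⟩ := (Submodule.ne_bot_iff _).mp <|
    LinearMap.ker_ne_bot_of_finrank_lt (f := f.domRestrict U) (by simpa using hU)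
  exact ⟨u, u.2, by simpa using hu0, hu⟩

section Signature

variable {n 𝕜 : Type*} [Fintype n] [Field 𝕜] [LinearOrder 𝕜] [IsStrictOrderedRing 𝕜]

lemma dotProduct_mulVec_nonpos_of_disjoint {C : Matrix n n 𝕜}
    (hoff : ∀ i j, i ≠ j → C i j ≤ 0) {y z : n → 𝕜} (hy : 0 ≤ y) (hz : 0 ≤ z)
    (hyz : ∀ i, y i * z i = 0) : y ⬝ᵥ C *ᵥ z ≤ 0 := by
  simp only [dotProduct, mulVec, Finset.mul_sum]
  refine Finset.sum_nonpos fun i _ => Finset.sum_nonpos fun j _ => ?_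
  obtain rfl | hij := eq_or_ne i j
  · rw [mul_left_comm, hyz, mul_zero]
  · rw [mul_left_comm]
    exact mul_nonpos_of_nonpos_of_nonneg (hoff i j hij) (mul_nonneg (hy i) (hz j))

lemma dotProduct_mulVec_posPart_add_negPart_le {C : Matrix n n 𝕜}
    (hoff : ∀ i j, i ≠ j → C i j ≤ 0) (x : n → 𝕜) :
    x⁺ ⬝ᵥ C *ᵥ x⁺ + x⁻ ⬝ᵥ C *ᵥ x⁻ ≤ x ⬝ᵥ C *ᵥ x := by
  have hdisj (i : n) : x⁺ i * x⁻ i = 0 := by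
    rcases le_total 0 (x i) with h | h <;> simp [h]
  have hpn := dotProduct_mulVec_nonpos_of_disjoint hoff (posPart_nonneg x) (negPart_nonneg x) hdisj
  have hnp := dotProduct_mulVec_nonpos_of_disjoint hoff (negPart_nonneg x) (posPart_nonneg x)
    fun i => by rw [mul_comm, hdisj]
  have hexpand : x ⬝ᵥ C *ᵥ x = x⁺ ⬝ᵥ C *ᵥ x⁺ - x⁺ ⬝ᵥ C *ᵥ x⁻ -
      (x⁻ ⬝ᵥ C *ᵥ x⁺ - x⁻ ⬝ᵥ C *ᵥ x⁻) := by
    conv_lhs => rw [← posPart_sub_negPart x]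
    simp only [mulVec_sub, sub_dotProduct, dotProduct_sub]
    ring
  linarith

variable {C : Matrix n n 𝕜} (hoff : ∀ i j, i ≠ j → C i j ≤ 0)
  (hpos : ∀ i j, i ≠ j → ∀ x, x ≠ 0 → x i = 0 → x j = 0 → 0 < x ⬝ᵥ C *ᵥ x)

include hoff hpos in
lemma mul_nonneg_of_dotProduct_mulVec_nonpos {z : n → 𝕜} (hz : z ⬝ᵥ C *ᵥ z ≤ 0) {i : n}
    (hi : z i = 0) (j k : n) : 0 ≤ z j * z k := by
  have key {j k : n} (hj : z j < 0) (hk : 0 < z k) : False := by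
    have hp := hpos i j (by rintro rfl; exact hj.ne hi) z⁺
      (fun h => by simpa [hk.not_ge] using congrFun h k) (by simp [hi]) (by simp [hj.le])
    have hn := hpos i k (by rintro rfl; exact hk.ne' hi) z⁻
      (fun h => by simpa [hj.not_ge] using congrFun h j) (by simp [hi]) (by simp [hk.le])
    linarith [dotProduct_mulVec_posPart_add_negPart_le hoff z]
  rw [mul_nonneg_iff]
  by_contra! h
  rcases lt_trichotomy (z j) 0 with hj | hj | hj
  · exact key hj (lt_of_not_ge fun hk => (h.2 hj.le).not_ge hk)
  · exact (h.1 hj.ge).not_ge (h.2 hj.le).le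
  · exact key (h.1 hj.le) hj

include hoff hpos in
theorem finrank_le_one_of_dotProduct_mulVec_nonpos (hn : 2 < Fintype.card n)
    {U : Submodule 𝕜 (n → 𝕜)} (hU : ∀ u ∈ U, u ⬝ᵥ C *ᵥ u ≤ 0) : finrank 𝕜 U ≤ 1 := by
  by_contra! hrank
  obtain ⟨i, j, k, hij, hik, hjk⟩ := Fintype.two_lt_card_iff.mp hn
  obtain ⟨u, huU, hu0, hui⟩ := exists_ne_zero_mem_apply_eq_zero hrank (LinearMap.proj i)
  obtain ⟨v, hvU, hv0, hvj⟩ := exists_ne_zero_mem_apply_eq_zero hrank (LinearMap.proj j)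
  have hne {z : n → 𝕜} (hzU : z ∈ U) (hz0 : z ≠ 0) {p q : n} (hpq : p ≠ q) (hp : z p = 0) :
      z q ≠ 0 := fun hq => (hpos p q hpq z hz0 hp hq).not_ge (hU z hzU)
  have hu : 0 < u k * u j :=
    (mul_ne_zero (hne huU hu0 hik hui) (hne huU hu0 hij hui)).symm.lt_of_le <|
      mul_nonneg_of_dotProduct_mulVec_nonpos hoff hpos (hU u huU) hui k j
  have hv : 0 < v k * v i :=
    (mul_ne_zero (hne hvU hv0 hjk hvj) (hne hvU hv0 hij.symm hvj)).symm.lt_of_le <|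
      mul_nonneg_of_dotProduct_mulVec_nonpos hoff hpos (hU v hvU) hvj k i
  -- The combination vanishing at `k` has opposite signs at `i` and `j`.
  have hw := mul_nonneg_of_dotProduct_mulVec_nonpos hoff hpos
    (hU (v k • u - u k • v) (U.sub_mem (U.smul_mem _ huU) (U.smul_mem _ hvU)))
    (i := k) (by simp [mul_comm]) i j
  have hwij : (v k • u - u k • v) i * (v k • u - u k • v) j = -((u k * u j) * (v k * v i)) := by
    simp only [Pi.sub_apply, Pi.smul_apply, smul_eq_mul, show u i = 0 from hui,
      show v j = 0 from hvj]
    ring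
  linarith [mul_pos hu hv]

end Signature

section RealSymmetric

variable {n : Type*} [Fintype n] [DecidableEq n] {C P : Matrix n n ℝ} {δ : n → ℝ}

lemma dotProduct_mulVec_mulVec_of_eq_diagonal (hPC : Pᵀ * C * P = diagonal δ) (x : n → ℝ) :
    (P *ᵥ x) ⬝ᵥ C *ᵥ (P *ᵥ x) = ∑ i, δ i * x i ^ 2 := by
  rw [← vecMul_transpose P x, ← dotProduct_mulVec, vecMul_transpose, mulVec_mulVec, mulVec_mulVec,
    hPC]
  simp only [dotProduct, mulVec_diagonal]
  exact Finset.sum_congr rfl fun i _ => by ring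

lemma ncard_nonpos_le_of_eq_diagonal (hP : IsUnit P.det) (hPC : Pᵀ * C * P = diagonal δ) {d : ℕ}
    (hd : ∀ U : Submodule ℝ (n → ℝ), (∀ u ∈ U, u ⬝ᵥ C *ᵥ u ≤ 0) → finrank ℝ U ≤ d) :
    {i | δ i ≤ 0}.ncard ≤ d := by
  classical
  have hinj : Function.Injective P.mulVecLin :=
    mulVec_injective_of_isUnit ((isUnit_iff_isUnit_det P).mpr hP)
  have hU := hd ((Pi.spanSubset ℝ {i | δ i ≤ 0}).map P.mulVecLin) <| by
    rintro _ ⟨x, hx, rfl⟩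
    rw [mulVecLin_apply, dotProduct_mulVec_mulVec_of_eq_diagonal hPC]
    refine Finset.sum_nonpos fun i _ => ?_
    by_cases hi : δ i ≤ 0
    · exact mul_nonpos_of_nonpos_of_nonneg hi (sq_nonneg _)
    · simp [Pi.mem_spanSubset_iff.mp hx i hi]
  rwa [← (Submodule.equivMapOfInjective _ hinj _).finrank_eq, Pi.dim_spanSubset] at hU

lemma exists_neg_of_not_posSemidef (hP : IsUnit P.det) (hPC : Pᵀ * C * P = diagonal δ)
    (hC : ¬ C.PosSemidef) : ∃ i, δ i < 0 := by
  by_contra! hδ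
  refine hC ?_
  rw [← ((isUnit_iff_isUnit_det P).mpr hP).posSemidef_star_left_conjugate_iff,
    star_eq_conjTranspose, conjTranspose_eq_transpose_of_trivial, hPC]
  exact posSemidef_diagonal_iff.mpr hδ

lemma exists_isUnit_det_eq_diagonal (hC : C.IsHermitian) :
    ∃ (P : Matrix n n ℝ) (δ : n → ℝ), IsUnit P.det ∧ Pᵀ * C * P = diagonal δ := by
  refine ⟨hC.eigenvectorUnitary, hC.eigenvalues,
    (isUnit_iff_isUnit_det _).mp (Unitary.isUnit_coe), ?_⟩
  have h := hC.conjStarAlgAut_star_eigenvectorUnitary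
  rw [Unitary.conjStarAlgAut_star_apply, star_eq_conjTranspose,
    conjTranspose_eq_transpose_of_trivial] at h
  simpa [Function.comp_def] using h

theorem exists_eq_diagonal_signature (hC : C.IsHermitian) (hneg : ¬ C.PosSemidef)
    (hU : ∀ U : Submodule ℝ (n → ℝ), (∀ u ∈ U, u ⬝ᵥ C *ᵥ u ≤ 0) → finrank ℝ U ≤ 1) :
    C.det ≠ 0 ∧ ∃ (P : Matrix n n ℝ) (δ : n → ℝ), IsUnit P.det ∧ Pᵀ * C * P = diagonal δ ∧
      {i | 0 < δ i}.ncard = Fintype.card n - 1 ∧ {i | δ i < 0}.ncard = 1 := by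
  obtain ⟨P, δ, hP, hPC⟩ := exists_isUnit_det_eq_diagonal hC
  obtain ⟨a, ha⟩ := exists_neg_of_not_posSemidef hP hPC hneg
  have hle : ∀ i, δ i ≤ 0 → i = a := fun i hi =>
    (Set.ncard_le_one).mp (ncard_nonpos_le_of_eq_diagonal hP hPC hU) i hi a ha.le
  have hlt : {i | δ i < 0} = {a} := Set.ext fun i =>
    ⟨fun hi => hle i (le_of_lt hi), by rintro rfl; exact ha⟩
  have hgt : {i | 0 < δ i} = {a}ᶜ := Set.ext fun i =>
    ⟨by rintro hi rfl; exact lt_asymm ha hi, fun hi => lt_of_not_ge fun h => hi (hle i h)⟩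
  refine ⟨fun hdet => ?_, P, δ, hP, hPC, ?_, ?_⟩
  · have hprod : ∏ i, δ i = 0 := by
      rw [← det_diagonal, ← hPC, det_mul, det_mul, hdet, mul_zero, zero_mul]
    obtain ⟨i, -, hi⟩ := Finset.prod_eq_zero_iff.mp hprod
    exact ha.ne (hle i hi.le ▸ hi)
  · rw [hgt, Set.ncard_compl, Set.ncard_singleton, Nat.card_eq_fintype_card]
  · rw [hlt, Set.ncard_singleton]

lemma posSemidef_of_sum_abs_le_diag (hC : C.IsHermitian)
    (hdiag : ∀ i, ∑ j ∈ Finset.univ.erase i, |C i j| ≤ C i i) : C.PosSemidef := by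
  refine hC.posSemidef_iff_eigenvalues_nonneg.mpr fun a => ?_
  have ha : End.HasEigenvalue (toLin' C) (hC.eigenvalues a) := by
    have h := hC.eigenvalues_mem_spectrum_real a
    rwa [← spectrum_toLin', ← End.hasEigenvalue_iff_mem_spectrum] at h
  obtain ⟨i, hi⟩ := eigenvalue_mem_ball ha
  simp only [Metric.mem_closedBall, Real.dist_eq, Real.norm_eq_abs] at hi
  simp only [Pi.zero_apply]
  linarith [neg_le_of_abs_le hi, hdiag i]

end RealSymmetric

/-! ### The cosine matrix and the geometric representation -/

section CosineMatrix

variable {B : Type*} (M : CoxeterMatrix B)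

/-- The Gram matrix of the Tits form of the Coxeter matrix `M` in the basis of simple roots; an
entry `0` of `M` stands for `∞` and yields `-2 * cos (π / 0) = -2`, as it should. -/
noncomputable def cosineMatrix : Matrix B B ℝ :=
  Matrix.of fun s t => -2 * Real.cos (Real.pi / M s t)

lemma cosineMatrix_apply (s t : B) : cosineMatrix M s t = -2 * Real.cos (Real.pi / M s t) := rfl

@[simp]
lemma cosineMatrix_apply_self (s : B) : cosineMatrix M s s = 2 := by simp [cosineMatrix_apply]

lemma cosineMatrix_apply_comm (s t : B) : cosineMatrix M s t = cosineMatrix M t s := by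
  simp [cosineMatrix_apply, M.symmetric s t]

lemma cosineMatrix_isSymm : (cosineMatrix M).IsSymm :=
  Matrix.IsSymm.ext fun s t => cosineMatrix_apply_comm M t s

lemma cosineMatrix_isHermitian : (cosineMatrix M).IsHermitian :=
  isHermitian_iff_isSymm.mpr (cosineMatrix_isSymm M)

lemma cosineMatrix_apply_nonpos {s t : B} (hst : s ≠ t) : cosineMatrix M s t ≤ 0 := by
  have hcos : 0 ≤ Real.cos (Real.pi / M s t) := by
    rcases Nat.eq_zero_or_pos (M s t) with h0 | h0
    · simp [h0]
    · have h2 : (2 : ℝ) ≤ M s t := by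
        exact_mod_cast (by have := M.off_diagonal s t hst; omega : 2 ≤ M s t)
      exact Real.cos_nonneg_of_neg_pi_div_two_le_of_le
        (by have : 0 ≤ Real.pi / M s t := by positivity
            linarith [Real.pi_pos])
        (div_le_div_of_nonneg_left Real.pi_pos.le two_pos h2)
  rw [cosineMatrix_apply]
  linarith

lemma abs_cosineMatrix_apply_le (s t : B) : |cosineMatrix M s t| ≤ 2 := by
  rw [cosineMatrix_apply, abs_mul, abs_neg, abs_two]
  linarith [Real.abs_cos_le_one (Real.pi / M s t)]

end CosineMatrix

section Chebyshev

open Polynomial.Chebyshev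

lemma sin_pi_div_natCast_pos {m : ℕ} (hm : 1 < m) : 0 < Real.sin (Real.pi / m) :=
  Real.sin_pos_of_pos_of_lt_pi (by positivity)
    (div_lt_self Real.pi_pos (by exact_mod_cast hm))

lemma eval_S_two_mul_cos_pi_div_nonneg {m k : ℕ} (hm : m ≠ 1) (hk : m ≠ 0 → k ≤ m) :
    0 ≤ (S ℝ (k - 1)).eval (2 * Real.cos (Real.pi / m)) := by
  rcases Nat.eq_zero_or_pos m with rfl | h0
  · simp
  have hsin : 0 < Real.sin (Real.pi / m) := sin_pi_div_natCast_pos (by omega)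
  refine nonneg_of_mul_nonneg_left ?_ hsin
  rw [S_two_mul_real_cos]
  push_cast
  rw [sub_add_cancel, mul_div_left_comm]
  refine Real.sin_nonneg_of_nonneg_of_le_pi (by positivity) ?_
  exact mul_le_of_le_one_right Real.pi_pos.le <|
    div_le_one_of_le₀ (by exact_mod_cast hk h0.ne') (Nat.cast_nonneg m)

lemma eval_S_eq_zero_of_sin_eq_zero {θ : ℝ} (hθ : Real.sin θ ≠ 0) {k : ℤ}
    (hk : Real.sin ((k + 1) * θ) = 0) : (S ℝ k).eval (2 * Real.cos θ) = 0 :=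
  (mul_eq_zero.mp <| (S_two_mul_real_cos θ k).trans hk).resolve_right hθ

lemma eval_S_add_eval_S_sub_one_eq_zero {θ : ℝ} (hθ : Real.sin (2 * θ) ≠ 0) {k : ℤ}
    (hk : Real.sin ((2 * k + 1) * θ) = 0) :
    (S ℝ k).eval (2 * Real.cos (2 * θ)) + (S ℝ (k - 1)).eval (2 * Real.cos (2 * θ)) = 0 := by
  refine (mul_eq_zero.mp ?_).resolve_right hθ
  rw [add_mul, S_two_mul_real_cos, S_two_mul_real_cos,
    show (k + 1) * (2 * θ) = (2 * k + 1) * θ + θ by ring,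
    show ((k - 1 : ℤ) + 1) * (2 * θ) = (2 * k + 1) * θ - θ by push_cast; ring,
    Real.sin_add, Real.sin_sub, hk]
  ring

end Chebyshev

section GeometricRep

lemma reflection_mul_reflection_pow_eq_one {V : Type*} [AddCommGroup V] [Module ℝ V] {x y : V}
    {f g : Dual ℝ V} (hf : f x = 2) (hg : g y = 2) {m : ℕ} (hm : 2 ≤ m)
    (hfy : f y = -2 * Real.cos (Real.pi / m)) (hgx : g x = -2 * Real.cos (Real.pi / m)) :
    (reflection hf * reflection hg) ^ m = 1 := by
  have ht : 2 * Real.cos (2 * (Real.pi / m)) = f y * g x - 2 := by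
    rw [hfy, hgx, Real.cos_two_mul]
    ring
  refine LinearEquiv.ext fun z => ?_
  rw [reflection_mul_reflection_pow_apply hf hg m z _ ht, LinearEquiv.coe_one, id]
  obtain rfl | hm3 := hm.eq_or_lt
  · simp only [hfy, hgx, Nat.cast_ofNat, Real.cos_pi_div_two, mul_zero, sub_self,
      mul_div_cancel₀ Real.pi (two_ne_zero' ℝ), Real.cos_pi, Int.reduceSub, Int.reduceDiv,
      Polynomial.Chebyshev.S_zero, Polynomial.Chebyshev.S_one,
      Polynomial.Chebyshev.S_neg_one, Polynomial.eval_zero, Polynomial.eval_one, Polynomial.eval_X]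
    module
  have hm0 : (m : ℝ) ≠ 0 := by positivity
  have hsin : Real.sin (2 * (Real.pi / m)) ≠ 0 := by
    refine (Real.sin_pos_of_pos_of_lt_pi (by positivity) ?_).ne'
    rw [mul_div_left_comm]
    exact mul_lt_of_lt_one_right Real.pi_pos
      ((div_lt_one (by positivity)).mpr (by exact_mod_cast hm3))
  rcases Int.even_or_odd' m with ⟨j, hj | hj⟩
  · have hmj : (m : ℝ) = 2 * j := by exact_mod_cast hj
    have hS := eval_S_eq_zero_of_sin_eq_zero hsin (k := j - 1) <| by
      rw [show ((j - 1 : ℤ) + 1) * (2 * (Real.pi / m)) = 2 * j * (Real.pi / m) by push_cast; ring,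
        ← hmj, mul_div_cancel₀ _ hm0, Real.sin_pi]
    rw [show ((m : ℤ) - 2) / 2 = j - 1 by omega, show ((m : ℤ) - 1) / 2 = j - 1 by omega, hS]
    simp
  · have hmj : (m : ℝ) = 2 * j + 1 := by exact_mod_cast hj
    have hS := eval_S_add_eval_S_sub_one_eq_zero hsin (k := j) <| by
      rw [← hmj, mul_div_cancel₀ _ hm0, Real.sin_pi]
    rw [show ((m : ℤ) - 2) / 2 = j - 1 by omega, show ((m : ℤ) - 3) / 2 = j - 1 by omega,
      show ((m : ℤ) - 1) / 2 = j by omega, show (m : ℤ) / 2 = j by omega, hS]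
    simp

variable {B : Type*} [Fintype B] (M : CoxeterMatrix B)

/-- The linear form `⟨α_s, ·⟩` of the Tits form of `M`. -/
noncomputable def simpleCoroot (s : B) : Dual ℝ (B → ℝ) :=
  LinearMap.proj s ∘ₗ (cosineMatrix M).mulVecLin

@[simp]
lemma simpleCoroot_apply (s : B) (z : B → ℝ) : simpleCoroot M s z = (cosineMatrix M *ᵥ z) s := rfl

variable [DecidableEq B]

lemma simpleCoroot_single (s t : B) :
    simpleCoroot M s (Pi.single t 1) = cosineMatrix M s t := by simp

/-- The reflection of `ℝ^B` in the simple root `α_s = Pi.single s 1`, orthogonal for the Tits form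
of `M`. -/
noncomputable def simpleReflection (s : B) : (B → ℝ) ≃ₗ[ℝ] (B → ℝ) :=
  reflection ((simpleCoroot_single M s s).trans (cosineMatrix_apply_self M s))

lemma simpleReflection_apply (s : B) (z : B → ℝ) :
    simpleReflection M s z = z - (cosineMatrix M *ᵥ z) s • Pi.single s 1 :=
  reflection_apply _ _

lemma simpleReflection_single (s t : B) :
    simpleReflection M s (Pi.single t 1) = Pi.single t 1 - cosineMatrix M s t • Pi.single s 1 := by
  simp [simpleReflection_apply]

lemma isLiftable_simpleReflection : M.IsLiftable (simpleReflection M) := by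
  intro s t
  obtain rfl | hst := eq_or_ne s t
  · rw [M.diagonal, pow_one]
    exact LinearEquiv.ext fun z => involutive_reflection _ z
  by_cases h0 : M s t = 0
  · rw [h0, pow_zero]
  refine reflection_mul_reflection_pow_eq_one _ _ (by have := M.off_diagonal s t hst; omega)
    (simpleCoroot_single M s t) ?_
  rw [simpleCoroot_single, cosineMatrix_apply_comm, cosineMatrix_apply]

/-- The geometric (Tits) representation of the Coxeter group of `M`. -/
noncomputable def geometricRep : M.Group →* (B → ℝ) ≃ₗ[ℝ] (B → ℝ) :=
  M.toCoxeterSystem.lift ⟨simpleReflection M, isLiftable_simpleReflection M⟩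

@[simp]
lemma geometricRep_simple (s : B) :
    geometricRep M (M.toCoxeterSystem.simple s) = simpleReflection M s :=
  M.toCoxeterSystem.lift_apply_simple (isLiftable_simpleReflection M) s

lemma geometricRep_alternatingWord_single (s t : B) (k : ℕ) :
    geometricRep M (M.toCoxeterSystem.wordProd (CoxeterSystem.alternatingWord s t k))
        (Pi.single s 1) =
      (Polynomial.Chebyshev.S ℝ k).eval (-cosineMatrix M s t) •
          Pi.single (if Even k then s else t) 1 +
        (Polynomial.Chebyshev.S ℝ (k - 1)).eval (-cosineMatrix M s t) •
          Pi.single (if Even k then t else s) 1 := by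
  induction k with
  | zero => simp [CoxeterSystem.alternatingWord]
  | succ k ih =>
    rw [CoxeterSystem.alternatingWord_succ', CoxeterSystem.wordProd_cons, map_mul,
      LinearEquiv.mul_apply, ih, geometricRep_simple, Nat.cast_succ, add_sub_cancel_right,
      Polynomial.Chebyshev.S_add_one]
    by_cases hk : Even k <;>
    · simp only [hk, Nat.even_add_one, not_true_eq_false, not_false_eq_true, if_true, if_false,
        map_add, map_smul, simpleReflection_single, cosineMatrix_apply_self,
        cosineMatrix_apply_comm M t s, Polynomial.eval_sub, Polynomial.eval_mul, Polynomial.eval_X]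
      module

end GeometricRep

section Length

open CoxeterSystem

variable {B W : Type*} [Group W] {M : CoxeterMatrix B} (cs : CoxeterSystem M W)

lemma not_isRightDescent_of_length_mul_wordProd_cons {v : W} {i : B} {ω : List B}
    (h : cs.length (v * cs.wordProd (i :: ω)) = cs.length v + (ω.length + 1)) :
    ¬ cs.IsRightDescent v i := by
  intro hi
  rw [wordProd_cons, ← mul_assoc] at h
  have hdesc := cs.isRightDescent_iff.mp hi
  have hmul := cs.length_mul_le (v * cs.simple i) (cs.wordProd ω)
  have hω := cs.length_wordProd_le ω
  omega

lemma exists_alternatingWord_suffix_not_isRightDescent {s t : B} {v : W} {k : ℕ}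
    (hlen : cs.length (v * cs.wordProd (alternatingWord s t k)) = cs.length v + k) :
    ∃ v' k', k ≤ k' ∧
      v * cs.wordProd (alternatingWord s t k) = v' * cs.wordProd (alternatingWord s t k') ∧
      cs.length (v' * cs.wordProd (alternatingWord s t k')) = cs.length v' + k' ∧
      ¬ cs.IsRightDescent v' (if Even k' then t else s) := by
  induction hn : cs.length v generalizing v k with
  | zero =>
    obtain rfl := cs.length_eq_zero_iff.mp hn
    exact ⟨1, k, le_rfl, rfl, hlen, by simp [IsRightDescent]⟩
  | succ n ih =>
    by_cases hv : cs.IsRightDescent v (if Even k then t else s)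
    · have hdesc := cs.isRightDescent_iff.mp hv
      have heq : v * cs.wordProd (alternatingWord s t k) =
          v * cs.simple (if Even k then t else s) *
            cs.wordProd (alternatingWord s t (k + 1)) := by
        rw [alternatingWord_succ', wordProd_cons, mul_assoc, simple_mul_simple_cancel_left]
      obtain ⟨v', k', hk, hw, hlen', hv'⟩ := ih (v := v * cs.simple (if Even k then t else s))
        (k := k + 1) (by rw [← heq]; omega) (by omega)
      exact ⟨v', k', by omega, heq.trans hw, hlen', hv'⟩
    · exact ⟨v, k, le_rfl, rfl, hlen, hv⟩

lemma exists_eq_mul_alternatingWord_of_isRightDescent {w : W} {t : B}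
    (ht : cs.IsRightDescent w t) (s : B) :
    ∃ v k, 1 ≤ k ∧ w = v * cs.wordProd (alternatingWord s t k) ∧ cs.length w = cs.length v + k ∧
      ¬ cs.IsRightDescent v s ∧ ¬ cs.IsRightDescent v t := by
  have hw : w * cs.simple t * cs.wordProd (alternatingWord s t 1) = w := by simp [alternatingWord]
  obtain ⟨v, k, hk, hwv, hlen, hnext⟩ :=
    exists_alternatingWord_suffix_not_isRightDescent cs (s := s) (t := t) (v := w * cs.simple t)
      (k := 1) (by rw [hw, cs.isRightDescent_iff.mp ht])
  rw [hw] at hwv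
  refine ⟨v, k, hk, hwv, hwv ▸ hlen, ?_⟩
  obtain ⟨j, rfl⟩ := Nat.exists_eq_add_of_le' hk
  have hlast : ¬ cs.IsRightDescent v (if Even j then t else s) := by
    refine not_isRightDescent_of_length_mul_wordProd_cons cs (ω := alternatingWord s t j) ?_
    rwa [← alternatingWord_succ', length_alternatingWord]
  by_cases hj : Even j <;> simp_all [Nat.even_add_one]

lemma lt_of_not_isRightDescent_of_eq_mul_alternatingWord {w v : W} {s t : B} {k : ℕ}
    (hs : ¬ cs.IsRightDescent w s) (hw : w = v * cs.wordProd (alternatingWord s t k))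
    (hlen : cs.length w = cs.length v + k) (hM : M s t ≠ 0) : k < M s t := by
  by_contra! hk
  refine cs.not_isReduced_alternatingWord t s (m := k + 1) (by rwa [M.symmetric])
    (by rw [M.symmetric]; omega) ?_
  have hsucc := cs.not_isRightDescent_iff.mp hs
  have heq : w * cs.simple s = v * cs.wordProd (alternatingWord t s (k + 1)) := by
    rw [alternatingWord_succ, wordProd_concat, hw, mul_assoc]
  have hmul := cs.length_mul_le v (cs.wordProd (alternatingWord t s (k + 1)))
  have hle := cs.length_wordProd_le (alternatingWord t s (k + 1))
  rw [← heq] at hmul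
  rw [CoxeterSystem.IsReduced]
  rw [length_alternatingWord] at hle ⊢
  omega

end Length

section RootPositivity

open CoxeterSystem

variable {B : Type*} [Fintype B] [DecidableEq B] (M : CoxeterMatrix B)

theorem geometricRep_single_nonneg {w : M.Group} {s : B}
    (hs : ¬ M.toCoxeterSystem.IsRightDescent w s) : 0 ≤ geometricRep M w (Pi.single s 1) := by
  induction hn : M.toCoxeterSystem.length w using Nat.strong_induction_on generalizing w s with
  | _ n ih =>
    obtain rfl | hw := eq_or_ne w 1
    · simp [Pi.single_nonneg]
    obtain ⟨t, ht⟩ := M.toCoxeterSystem.exists_rightDescent_of_ne_one hw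
    have hst : s ≠ t := by rintro rfl; exact hs ht
    obtain ⟨v, k, hk, hwv, hlen, hvs, hvt⟩ :=
      exists_eq_mul_alternatingWord_of_isRightDescent M.toCoxeterSystem ht s
    have hkM := lt_of_not_isRightDescent_of_eq_mul_alternatingWord M.toCoxeterSystem hs hwv hlen
    have hcoeff {j : ℕ} (hj : j ≤ k + 1) :
        0 ≤ (Polynomial.Chebyshev.S ℝ (j - 1)).eval (-cosineMatrix M s t) := by
      rw [cosineMatrix_apply, neg_mul, neg_neg]
      exact eval_S_two_mul_cos_pi_div_nonneg (M.off_diagonal s t hst)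
        fun h0 => hj.trans (hkM h0)
    have hv {r : B} (hr : ¬ M.toCoxeterSystem.IsRightDescent v r) :
        0 ≤ geometricRep M v (Pi.single r 1) := ih _ (by omega) hr rfl
    have hk1 := hcoeff (j := k + 1) le_rfl
    rw [Nat.cast_succ, add_sub_cancel_right] at hk1
    rw [hwv, map_mul, LinearEquiv.mul_apply, geometricRep_alternatingWord_single, map_add, map_smul,
      map_smul]
    exact add_nonneg (smul_nonneg hk1 (hv (by split_ifs <;> assumption)))
      (smul_nonneg (hcoeff (Nat.le_succ k)) (hv (by split_ifs <;> assumption)))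

lemma exists_geometricRep_single_nonpos {w : M.Group} (hw : w ≠ 1) :
    ∃ s, geometricRep M w (Pi.single s 1) ≤ 0 := by
  obtain ⟨s, hs⟩ := M.toCoxeterSystem.exists_rightDescent_of_ne_one hw
  refine ⟨s, ?_⟩
  have h := geometricRep_single_nonneg M
    (M.toCoxeterSystem.isRightDescent_iff_not_isRightDescent_mul.mp hs)
  rwa [map_mul, LinearEquiv.mul_apply, geometricRep_simple, simpleReflection_single,
    cosineMatrix_apply_self, two_smul, sub_add_cancel_left, map_neg, neg_nonneg] at h

end RootPositivity

/-! ### Growth of Coxeter groups -/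

section Packing

open MeasureTheory Metric

lemma card_mul_pow_finrank_le_of_le_dist {ι E : Type*} [NormedAddCommGroup E] [NormedSpace ℝ E]
    [FiniteDimensional ℝ E] {T : Finset ι} {c : ι → E} {r R : ℝ} (hr : 0 < r) (hR : 0 ≤ R)
    (hc : ∀ i ∈ T, ‖c i‖ ≤ R) (hsep : ∀ i ∈ T, ∀ j ∈ T, i ≠ j → r ≤ dist (c i) (c j)) :
    T.card * r ^ finrank ℝ E ≤ (2 * R + r) ^ finrank ℝ E := by
  borelize E
  let μ : Measure E := Measure.addHaar
  have hdisj : (T : Set ι).PairwiseDisjoint fun i => ball (c i) (r / 2) := fun i hi j hj hij =>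
    ball_disjoint_ball (by rw [add_halves]; exact hsep i hi j hj hij)
  have hsub : ⋃ i ∈ T, ball (c i) (r / 2) ⊆ ball 0 (R + r / 2) :=
    Set.iUnion₂_subset fun i hi => ball_subset_ball' (by
      rw [dist_zero_right, add_comm]
      gcongr
      exact hc i hi)
  have hball (x : E) {ρ : ℝ} (hρ : 0 < ρ) :
      μ.real (ball x ρ) = ρ ^ finrank ℝ E * μ.real (ball 0 1) := by
    simp [measureReal_def, μ.addHaar_ball_of_pos x hρ, hρ.le]
  have hvol : T.card * (r / 2) ^ finrank ℝ E * μ.real (ball 0 1) ≤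
      (R + r / 2) ^ finrank ℝ E * μ.real (ball 0 1) := by
    calc T.card * (r / 2) ^ finrank ℝ E * μ.real (ball 0 1)
        = ∑ i ∈ T, μ.real (ball (c i) (r / 2)) := by
          simp [hball _ (half_pos hr), mul_assoc]
      _ = μ.real (⋃ i ∈ T, ball (c i) (r / 2)) :=
          (measureReal_biUnion_finset hdisj fun _ _ => measurableSet_ball).symm
      _ ≤ μ.real (ball 0 (R + r / 2)) := measureReal_mono hsub
      _ = (R + r / 2) ^ finrank ℝ E * μ.real (ball 0 1) :=
          hball 0 (by positivity)
  have hle := le_of_mul_le_mul_right hvol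
    (ENNReal.toReal_pos (measure_ball_pos μ 0 one_pos).ne' measure_ball_lt_top.ne)
  calc T.card * r ^ finrank ℝ E = 2 ^ finrank ℝ E * (T.card * (r / 2) ^ finrank ℝ E) := by
        rw [mul_left_comm, ← mul_pow, mul_div_cancel₀ _ two_ne_zero]
    _ ≤ 2 ^ finrank ℝ E * (R + r / 2) ^ finrank ℝ E := by gcongr
    _ = (2 * R + r) ^ finrank ℝ E := by
        rw [← mul_pow, mul_add, mul_div_cancel₀ _ two_ne_zero]

end Packing

section Gram

lemma gram_mulVec_apply {ι E : Type*} [Fintype ι] [NormedAddCommGroup E] [InnerProductSpace ℝ E]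
    (a : ι → E) (z : ι → ℝ) (i : ι) :
    (gram ℝ a *ᵥ z) i = ⟪a i, Fintype.linearCombination ℝ a z⟫_ℝ := by
  simp [mulVec, dotProduct, Fintype.linearCombination_apply, inner_sum, inner_smul_right, mul_comm]

open scoped MatrixOrder in
lemma exists_gram_eq_of_posSemidef {ι : Type*} [Fintype ι] {C : Matrix ι ι ℝ}
    (hC : C.PosSemidef) : ∃ a : ι → EuclideanSpace ℝ ι, gram ℝ a = C := by
  classical
  obtain ⟨X, rfl⟩ := CStarAlgebra.nonneg_iff_eq_star_mul_self.mp hC.nonneg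
  refine ⟨fun i => WithLp.toLp 2 (X.col i), Matrix.ext fun i j => ?_⟩
  simp [gram_apply, mul_apply, PiLp.inner_apply, mul_comm]

end Gram

section GramRepresentation

variable {B E : Type*} [NormedAddCommGroup E] [InnerProductSpace ℝ E] {M : CoxeterMatrix B}
  {a : B → E}

lemma norm_of_gram_eq_cosineMatrix (ha : gram ℝ a = cosineMatrix M) (s : B) : ‖a s‖ = √2 := by
  rw [← Real.sqrt_sq (norm_nonneg _), ← real_inner_self_eq_norm_sq, ← gram_apply (𝕜 := ℝ), ha,
    cosineMatrix_apply_self]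

variable [Fintype B] [DecidableEq B]

lemma linearCombination_simpleReflection (ha : gram ℝ a = cosineMatrix M) (s : B) (z : B → ℝ) :
    Fintype.linearCombination ℝ a (simpleReflection M s z) =
      (ℝ ∙ a s)ᗮ.reflection (Fintype.linearCombination ℝ a z) := by
  rw [simpleReflection_apply, map_sub, map_smul, Fintype.linearCombination_apply_single, one_smul,
    Submodule.reflection_orthogonal_apply, Submodule.reflection_singleton_apply, neg_sub,
    norm_of_gram_eq_cosineMatrix ha, ← ha, gram_mulVec_apply]
  simp [two_smul, ← add_smul]

lemma norm_linearCombination_geometricRep (ha : gram ℝ a = cosineMatrix M) (w : M.Group)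
    (z : B → ℝ) :
    ‖Fintype.linearCombination ℝ a (geometricRep M w z)‖ = ‖Fintype.linearCombination ℝ a z‖ := by
  induction w using M.toCoxeterSystem.simple_induction_left with
  | one => simp
  | mul_simple_left w s ih =>
    rw [map_mul, LinearEquiv.mul_apply, geometricRep_simple, linearCombination_simpleReflection ha,
      LinearIsometryEquiv.norm_map, ih]

lemma sum_simpleReflection (ha : gram ℝ a = cosineMatrix M) (s : B) (z : B → ℝ) :
    ∑ i, simpleReflection M s z i = ∑ i, z i - ⟪a s, Fintype.linearCombination ℝ a z⟫_ℝ := by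
  simp [simpleReflection_apply, ← ha, gram_mulVec_apply, Finset.sum_sub_distrib, ← Finset.mul_sum]

lemma exists_norm_le_sum_geometricRep_wordProd (ha : gram ℝ a = cosineMatrix M) (ω : List B) :
    ∃ c : E, ‖c‖ ≤ √2 * ω.length ∧ ∀ z,
      ∑ i, geometricRep M (M.toCoxeterSystem.wordProd ω) z i =
        ∑ i, z i - ⟪c, Fintype.linearCombination ℝ a z⟫_ℝ := by
  induction ω using List.reverseRecOn with
  | nil => exact ⟨0, by simp⟩
  | append_singleton ω s ih =>
    obtain ⟨c, hc, hsum⟩ := ih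
    refine ⟨a s + (ℝ ∙ a s)ᗮ.reflection c, ?_, fun z => ?_⟩
    · have := norm_add_le (a s) ((ℝ ∙ a s)ᗮ.reflection c)
      rw [LinearIsometryEquiv.norm_map, norm_of_gram_eq_cosineMatrix ha] at this
      rw [List.length_append, List.length_singleton, Nat.cast_succ]
      linarith
    · rw [CoxeterSystem.wordProd_append, CoxeterSystem.wordProd_singleton, map_mul,
        LinearEquiv.mul_apply, geometricRep_simple, hsum, sum_simpleReflection ha,
        linearCombination_simpleReflection ha, inner_add_left, sub_sub,
        ← LinearIsometryEquiv.inner_map_map (ℝ ∙ a s)ᗮ.reflection c,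
        Submodule.reflection_reflection]

lemma exists_norm_le_sum_geometricRep (ha : gram ℝ a = cosineMatrix M) (g : M.Group) :
    ∃ c : E, ‖c‖ ≤ √2 * M.toCoxeterSystem.length g ∧ ∀ z,
      ∑ i, geometricRep M g z i = ∑ i, z i - ⟪c, Fintype.linearCombination ℝ a z⟫_ℝ := by
  obtain ⟨ω, hω, rfl⟩ := M.toCoxeterSystem.exists_isReduced g
  rw [hω.eq]
  exact exists_norm_le_sum_geometricRep_wordProd ha ω

lemma one_le_sqrt_two_mul_dist (ha : gram ℝ a = cosineMatrix M) {g h : M.Group} (hgh : g ≠ h)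
    {c d : E}
    (hc : ∀ z, ∑ i, geometricRep M g z i = ∑ i, z i - ⟪c, Fintype.linearCombination ℝ a z⟫_ℝ)
    (hd : ∀ z, ∑ i, geometricRep M h z i = ∑ i, z i - ⟪d, Fintype.linearCombination ℝ a z⟫_ℝ) :
    1 ≤ √2 * dist c d := by
  obtain ⟨s, hs⟩ := exists_geometricRep_single_nonpos M (w := g * h⁻¹)
    fun h1 => hgh (mul_inv_eq_one.mp h1)
  set β := geometricRep M h⁻¹ (Pi.single s 1) with hβ
  have hgβ : ∑ i, geometricRep M g β i ≤ 0 := by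
    rw [hβ, ← LinearEquiv.mul_apply, ← map_mul]
    exact Finset.sum_nonpos fun i _ => hs i
  have hhβ : ∑ i, geometricRep M h β i = 1 := by
    rw [hβ, ← LinearEquiv.mul_apply, ← map_mul]
    simp
  have hnorm : ‖Fintype.linearCombination ℝ a β‖ = √2 := by
    rw [hβ, norm_linearCombination_geometricRep ha, Fintype.linearCombination_apply_single,
      one_smul, norm_of_gram_eq_cosineMatrix ha]
  calc 1 ≤ ⟪c - d, Fintype.linearCombination ℝ a β⟫_ℝ := by
        rw [inner_sub_left]
        linarith [hc β, hd β]
    _ ≤ ‖c - d‖ * ‖Fintype.linearCombination ℝ a β‖ := real_inner_le_norm _ _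
    _ = √2 * dist c d := by rw [hnorm, dist_eq_norm, mul_comm]

end GramRepresentation

theorem card_le_pow_of_cosineMatrix_posSemidef {B : Type*} [Fintype B] {M : CoxeterMatrix B}
    (hM : (cosineMatrix M).PosSemidef) {L : ℕ} {T : Finset M.Group}
    (hT : ∀ g ∈ T, M.toCoxeterSystem.length g ≤ L) :
    T.card ≤ (4 * L + 1) ^ Fintype.card B := by
  classical
  obtain ⟨a, ha⟩ := exists_gram_eq_of_posSemidef hM
  choose c hc hsum using exists_norm_le_sum_geometricRep ha
  have hsq : √2 * √2 = 2 := Real.mul_self_sqrt zero_le_two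
  have hvol := card_mul_pow_finrank_le_of_le_dist (T := T) (c := fun g => √2 • c g) one_pos
    (R := 2 * L) (by positivity)
    (fun g hg => by
      rw [norm_smul, Real.norm_of_nonneg (Real.sqrt_nonneg 2)]
      calc √2 * ‖c g‖ ≤ √2 * (√2 * L) := by
            gcongr
            exact (hc g).trans (by gcongr; exact_mod_cast hT g hg)
        _ = 2 * L := by rw [← mul_assoc, hsq])
    (fun g _ h _ hgh => by
      rw [dist_smul₀, Real.norm_of_nonneg (Real.sqrt_nonneg 2)]
      exact one_le_sqrt_two_mul_dist ha hgh (hsum g) (hsum h))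
  rw [one_pow, mul_one, finrank_euclideanSpace, ← mul_assoc,
    show (2 * 2 : ℝ) = 4 by norm_num] at hvol
  exact_mod_cast hvol

section ExponentialGrowth

open FreeMonoid Filter

lemma injective_freeMonoidLift_freeGroupOf (α : Type*) :
    Function.Injective (FreeMonoid.lift (FreeGroup.of : α → FreeGroup α)) := by
  classical
  have htoWord (w : FreeMonoid α) :
      (FreeMonoid.lift FreeGroup.of w).toWord = w.toList.map (·, true) := by
    have hmk : FreeMonoid.lift FreeGroup.of w = FreeGroup.mk (w.toList.map (·, true)) := by
      induction w using FreeMonoid.inductionOn' with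
      | one => rfl
      | of_mul a w ih =>
        rw [map_mul, ih, FreeMonoid.lift_eval_of, FreeGroup.of, FreeGroup.mul_mk]
        rfl
    rw [hmk, FreeGroup.toWord_mk]
    exact FreeGroup.IsReduced.reduce_eq <| List.Pairwise.isChain <|
      List.pairwise_map.mpr <| List.pairwise_of_forall fun _ _ _ => rfl
  intro v w hvw
  refine FreeMonoid.toList.injective (List.map_injective_iff.mpr (Prod.mk_left_injective true) ?_)
  rw [← htoWord, ← htoWord, hvw]

lemma exists_injective_freeMonoid_of_surjective {α G : Type*} [Group G] {H : Subgroup G}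
    {φ : H →* FreeGroup α} (hφ : Function.Surjective φ) :
    ∃ f : FreeMonoid α →* G, Function.Injective f := by
  choose a ha using fun i => hφ (FreeGroup.of i)
  refine ⟨H.subtype.comp (FreeMonoid.lift a), H.subtype_injective.comp <|
    Function.Injective.of_comp (f := φ) ?_⟩
  rw [← MonoidHom.coe_comp, FreeMonoid.comp_lift, show φ ∘ a = FreeGroup.of from funext ha]
  exact injective_freeMonoidLift_freeGroupOf α

variable {B W α : Type*} [Group W] {M : CoxeterMatrix B} (cs : CoxeterSystem M W)

lemma exists_length_map_le_mul_length [Finite α] (f : FreeMonoid α →* W) :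
    ∃ c, ∀ w, cs.length (f w) ≤ c * w.length := by
  have := Fintype.ofFinite α
  refine ⟨∑ a, cs.length (f (of a)), fun w => ?_⟩
  induction w using FreeMonoid.inductionOn' with
  | one => simp
  | of_mul a w ih =>
    rw [map_mul, length_mul, length_of, mul_add, mul_one]
    exact (cs.length_mul_le _ _).trans <| add_le_add
      (Finset.single_le_sum (f := fun a => cs.length (f (of a))) (fun _ _ => Nat.zero_le _)
        (Finset.mem_univ a)) ih

lemma exists_finset_card_eq_pow_of_injective [Fintype α] {f : FreeMonoid α →* W}
    (hf : Function.Injective f) :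
    ∃ c, ∀ k, ∃ T : Finset W,
      T.card = Fintype.card α ^ k ∧ ∀ g ∈ T, cs.length g ≤ c * k := by
  obtain ⟨c, hc⟩ := exists_length_map_le_mul_length cs f
  refine ⟨c, fun k => ⟨Finset.univ.map ⟨fun v : Fin k → α => f (ofList (List.ofFn v)),
    hf.comp (ofList.injective.comp List.ofFn_injective)⟩, by simp, fun g hg => ?_⟩⟩
  obtain ⟨v, -, rfl⟩ := Finset.mem_map.mp hg
  exact (hc _).trans_eq (by simp [FreeMonoid.length])

lemma exists_mul_add_one_pow_lt_pow (A d : ℕ) {b : ℕ} (hb : 1 < b) :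
    ∃ k, (A * k + 1) ^ d < b ^ k := by
  have hlim := (tendsto_pow_const_div_const_pow_of_one_lt d (r := b)
    (by exact_mod_cast hb)).const_mul ((A + 1 : ℝ) ^ d)
  rw [mul_zero] at hlim
  obtain ⟨k, hk, hk1⟩ :=
    ((hlim.eventually (gt_mem_nhds one_pos)).and (eventually_ge_atTop 1)).exists
  rw [← mul_div_assoc, ← mul_pow, div_lt_one (by positivity)] at hk
  refine ⟨k, lt_of_le_of_lt (Nat.pow_le_pow_left ?_ d) (by exact_mod_cast hk)⟩
  rw [add_one_mul]
  exact Nat.add_le_add_left hk1 _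

theorem not_posSemidef_cosineMatrix_of_injective [Finite B] [Finite α] [Nontrivial α]
    {f : FreeMonoid α →* M.Group} (hf : Function.Injective f) :
    ¬ (cosineMatrix M).PosSemidef := by
  have := Fintype.ofFinite α
  have := Fintype.ofFinite B
  intro hM
  obtain ⟨c, hc⟩ := exists_finset_card_eq_pow_of_injective M.toCoxeterSystem hf
  obtain ⟨k, hk⟩ := exists_mul_add_one_pow_lt_pow (4 * c) (Fintype.card B)
    (Fintype.one_lt_card (α := α))
  obtain ⟨T, hcard, hT⟩ := hc k
  have hle := card_le_pow_of_cosineMatrix_posSemidef hM hT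
  rw [hcard, ← mul_assoc] at hle
  exact hk.not_ge hle

end ExponentialGrowth

/-! ### Finite parabolic subgroups -/

section Parabolic

variable {B : Type*} [Fintype B]

lemma exists_posDef_invariant {G : Type*} [Group G] [Finite G]
    (ρ : G →* (B → ℝ) ≃ₗ[ℝ] (B → ℝ)) :
    ∃ K : Matrix B B ℝ, K.PosDef ∧ ∀ g x y, ρ g x ⬝ᵥ K *ᵥ ρ g y = x ⬝ᵥ K *ᵥ y := by
  classical
  have := Fintype.ofFinite G
  let A (g : G) : Matrix B B ℝ := LinearMap.toMatrix' (ρ g).toLinearMap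
  have hA (g : G) (x : B → ℝ) : A g *ᵥ x = ρ g x := LinearMap.toMatrix'_mulVec _ x
  have hdot (x y : B → ℝ) : x ⬝ᵥ (∑ g, (A g)ᵀ * A g) *ᵥ y = ∑ g, ρ g x ⬝ᵥ ρ g y := by
    simp only [sum_mulVec, dotProduct_sum, ← mulVec_mulVec, dotProduct_mulVec x, vecMul_transpose,
      hA]
  refine ⟨∑ g, (A g)ᵀ * A g, posDef_sum ⟨1, Finset.mem_univ _⟩ fun g _ => ?_, fun h x y => ?_⟩
  · refine PosDef.conjTranspose_mul_self _ fun x y hxy => (ρ g).injective ?_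
    rwa [← hA, ← hA]
  · rw [hdot, hdot]
    exact Fintype.sum_equiv (Equiv.mulRight h) _ _ fun g => by simp

lemma two_mul_apply_eq_of_simpleReflection_invariant [DecidableEq B] {M : CoxeterMatrix B}
    {K : Matrix B B ℝ} {s : B}
    (hK : ∀ x y, simpleReflection M s x ⬝ᵥ K *ᵥ simpleReflection M s y = x ⬝ᵥ K *ᵥ y) (t : B) :
    2 * K t s = cosineMatrix M s t * K s s := by
  have h := hK (Pi.single t 1) (Pi.single s 1)
  rw [simpleReflection_single, simpleReflection_single, cosineMatrix_apply_self, two_smul,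
    sub_add_cancel_left] at h
  simp only [mulVec_neg, dotProduct_neg, sub_dotProduct, smul_dotProduct, mulVec_single_one,
    single_one_dotProduct, col_apply, smul_eq_mul] at h
  linarith

lemma dotProduct_mulVec_pos_of_two_mul_apply_eq {C K : Matrix B B ℝ} {T : Set B}
    (hC : C.IsSymm) (hK : K.PosDef) (hCK : ∀ s ∈ T, ∀ t, 2 * K t s = C s t * K s s)
    {x : B → ℝ} (hx : x ≠ 0) (hxT : ∀ s ∉ T, x s = 0) : 0 < x ⬝ᵥ C *ᵥ x := by
  -- If `C s t ≠ 0`, then `K s s = K t t`; so scaling the basis by `√(K s s)` turns `C` into `2 K`.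
  have hsqrt (s : B) : 0 < √(K s s) := Real.sqrt_pos.mpr hK.diag_pos
  have hCsqrt {s t : B} (hs : s ∈ T) (ht : t ∈ T) : C s t * (√(K s s) * √(K t t)) = 2 * K s t := by
    have hst : C s t * K t t = 2 * K s t := by rw [hCK t ht, hC.apply]
    have hts : C s t * K s s = 2 * K s t := by
      rw [← hCK s hs, ← (isHermitian_iff_isSymm.mp hK.isHermitian).apply]
    rcases eq_or_ne (C s t) 0 with h0 | h0
    · rw [← hst, h0, zero_mul, zero_mul]
    · rw [mul_left_cancel₀ h0 (hts.trans hst.symm), Real.mul_self_sqrt hK.diag_pos.le, hst]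
  set y : B → ℝ := fun s => x s / √(K s s) with hy
  have hxy (s : B) : x s = y s * √(K s s) := (div_mul_cancel₀ _ (hsqrt s).ne').symm
  have hy0 : y ≠ 0 := fun h => hx (funext fun s => by rw [hxy, h]; simp)
  have hCK : x ⬝ᵥ C *ᵥ x = 2 * (y ⬝ᵥ K *ᵥ y) := by
    simp only [dotProduct, mulVec, Finset.mul_sum]
    refine Finset.sum_congr rfl fun s _ => Finset.sum_congr rfl fun t _ => ?_
    by_cases hs : s ∈ T
    · by_cases ht : t ∈ T
      · rw [hxy s, hxy t]
        linear_combination y s * y t * hCsqrt hs ht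
      · simp [hy, hxT t ht]
    · simp [hy, hxT s hs]
  rw [hCK]
  exact mul_pos two_pos (by simpa using hK.dotProduct_mulVec_pos hy0)

lemma dotProduct_cosineMatrix_mulVec_pos_of_finite (M : CoxeterMatrix B) {T : Set B}
    (hT : Finite (Subgroup.closure (M.simple '' T))) {x : B → ℝ} (hx : x ≠ 0)
    (hxT : ∀ s ∉ T, x s = 0) : 0 < x ⬝ᵥ cosineMatrix M *ᵥ x := by
  classical
  obtain ⟨K, hK, hinv⟩ :=
    exists_posDef_invariant ((geometricRep M).comp (Subgroup.closure (M.simple '' T)).subtype)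
  refine dotProduct_mulVec_pos_of_two_mul_apply_eq (cosineMatrix_isSymm M) hK
    (fun s hs t => two_mul_apply_eq_of_simpleReflection_invariant (fun x y => ?_) t) hx hxT
  have h := hinv ⟨M.simple s, Subgroup.subset_closure ⟨s, hs, rfl⟩⟩ x y
  rwa [← geometricRep_simple]

end Parabolic

/-! ### Maxwell's theorem -/

section Maxwell

variable {B : Type*} [Fintype B] {M : CoxeterMatrix B}

lemma cosineMatrix_posSemidef_of_card_le_two (hB : Fintype.card B ≤ 2) :
    (cosineMatrix M).PosSemidef := by
  classical
  refine posSemidef_of_sum_abs_le_diag (cosineMatrix_isHermitian M) fun s => ?_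
  have hcard : ((Finset.univ.erase s).card : ℝ) ≤ 1 := by
    rw [Finset.card_erase_of_mem (Finset.mem_univ s), Finset.card_univ]
    exact_mod_cast Nat.sub_le_sub_right hB 1
  calc ∑ t ∈ Finset.univ.erase s, |cosineMatrix M s t|
      ≤ (Finset.univ.erase s).card * 2 := by
        rw [← nsmul_eq_mul]
        exact Finset.sum_le_card_nsmul _ _ _ fun t _ => abs_cosineMatrix_apply_le M s t
    _ ≤ cosineMatrix M s s := by
        rw [cosineMatrix_apply_self]
        linarith

theorem maxwell_two_lanner_signature_general [DecidableEq B] {f : FreeMonoid (Fin 2) →* M.Group}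
    (hf : Function.Injective f)
    (h2lanner : ∀ s t, s ≠ t → Finite (Subgroup.closure (M.simple '' {u | u ≠ s ∧ u ≠ t}))) :
    (cosineMatrix M).det ≠ 0 ∧
    ∃ (P : Matrix B B ℝ) (δ : B → ℝ),
      IsUnit P.det ∧ Pᵀ * cosineMatrix M * P = diagonal δ ∧
      {i | 0 < δ i}.ncard = Fintype.card B - 1 ∧ {i | δ i < 0}.ncard = 1 := by
  have hneg := not_posSemidef_cosineMatrix_of_injective hf
  have hcard : 2 < Fintype.card B :=
    not_le.mp fun h => hneg (cosineMatrix_posSemidef_of_card_le_two h)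
  refine exists_eq_diagonal_signature (cosineMatrix_isHermitian M) hneg fun U hU =>
    finrank_le_one_of_dotProduct_mulVec_nonpos (fun _ _ => cosineMatrix_apply_nonpos M)
      (fun s t hst x hx hs ht => ?_) hcard hU
  refine dotProduct_cosineMatrix_mulVec_pos_of_finite M (h2lanner s t hst) hx fun u hu => ?_
  rcases not_and_or.mp hu with h | h
  · rwa [not_not.mp h]
  · rwa [not_not.mp h]

end Maxwell

/-- **Maxwell's theorem.** Let `M` be the Coxeter matrix (entry `0` standing for `∞`) of a
2-Lannér Coxeter group of rank `n`: the group is irreducible (connected Coxeter diagram),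
large (some finite-index subgroup surjects onto a nonabelian free group), and the standard
subgroup generated by any `n − 2` of the simple reflections is finite.  Then the Tits
symmetric bilinear form, given by the cosine matrix `C s t = −2 cos(π / M s t)`, is
nondegenerate of signature `(n − 1, 1)`. -/
theorem maxwell_two_lanner_signature (n : ℕ) (M : CoxeterMatrix (Fin n))
    (hirr : ∀ s t : Fin n, Relation.ReflTransGen (fun a b => a ≠ b ∧ M.M a b ≠ 2) s t)
    (hlarge : ∃ H : Subgroup M.Group, H.FiniteIndex ∧
        ∃ φ : H →* FreeGroup (Fin 2), Function.Surjective φ)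
    (h2lanner : ∀ s t : Fin n, s ≠ t →
        Finite (Subgroup.closure (M.simple '' {u : Fin n | u ≠ s ∧ u ≠ t}) : Subgroup M.Group))
    (C : Matrix (Fin n) (Fin n) ℝ)
    (hC : ∀ s t, C s t = -2 * Real.cos (Real.pi / (M.M s t : ℝ))) :
    C.det ≠ 0 ∧
    ∃ (P : Matrix (Fin n) (Fin n) ℝ) (δ : Fin n → ℝ),
      IsUnit P.det ∧ Matrix.transpose P * C * P = Matrix.diagonal δ ∧
      {i | 0 < δ i}.ncard = n - 1 ∧ {i | δ i < 0}.ncard = 1 := by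
  obtain rfl : C = cosineMatrix M := Matrix.ext hC
  obtain ⟨H, -, φ, hφ⟩ := hlarge
  obtain ⟨f, hf⟩ := exists_injective_freeMonoid_of_surjective hφ
  simpa using maxwell_two_lanner_signature_general hf h2lanner
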